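/- Let ℓ, m, n be positive integers with ℓ·m = n². Then τ(ℓ,m) ≤ τ(n,n): among all rectangular grid graphs with n² vertices, the square n×n grid has the largest number of spanning trees. -/

import Mathlib

/-- The rectangular grid graph `R_{ℓ,m}`: the box (Cartesian) product of the path
graphs on `ℓ` and `m` vertices. -/
def gridGraph (l m : ℕ) : SimpleGraph (Fin l × Fin m) :=
  (SimpleGraph.pathGraph l).boxProd (SimpleGraph.pathGraph m)

/-- `gridTau l m` is the number of spanning trees of the `l × m` rectangular grid graph,
i.e. the number of spanning subgraphs of `gridGraph l m` that are trees. -/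
noncomputable def gridTau (l m : ℕ) : ℕ :=
  Set.ncard {H : (gridGraph l m).Subgraph | H.IsSpanning ∧ H.coe.IsTree}

section Main

open Matrix Finset

section MatrixTree
variable {V : Type*} [Fintype V] [DecidableEq V]

/-- Matrix of a parent function. -/
def parMat (r : V) (p : V → V) : Matrix V V ℝ :=
  fun v => if v = r then Pi.single r 1 else Pi.single v 1 - Pi.single (p v) 1

lemma parMat_det_zero (r : V) (p : V → V) (hp : p r = r)
    (h : ¬ ∀ v, ∃ k : ℕ, p^[k] v = r) : (parMat r p).det = 0 := by
  classical
  rw [← Matrix.exists_mulVec_eq_zero_iff]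
  refine ⟨fun v => if ∃ k : ℕ, p^[k] v = r then 0 else 1, ?_, ?_⟩
  · intro h0
    apply h
    intro v
    by_contra hv
    have := congrFun h0 v
    simp [hv] at this
  · funext v
    by_cases hv : v = r
    · have : ∃ k : ℕ, p^[k] r = r := ⟨0, rfl⟩
      simp only [mulVec, parMat, hv, if_true, single_dotProduct]
      simp [this]
    · have h1 : (∃ k : ℕ, p^[k] v = r) ↔ (∃ k : ℕ, p^[k] (p v) = r) := by
        constructor
        · rintro ⟨k, hk⟩
          cases k with
          | zero => exact absurd hk hv
          | succ k => exact ⟨k, hk⟩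
        · rintro ⟨k, hk⟩
          exact ⟨k + 1, hk⟩
      simp only [mulVec, parMat, hv, if_false, sub_dotProduct, single_dotProduct]
      simp [h1]

lemma exists_depth (r : V) (p : V → V) (hp : p r = r)
    (h : ∀ v, ∃ k : ℕ, p^[k] v = r) : ∃ d : V → ℕ, ∀ v, v ≠ r → d v = d (p v) + 1 := by
  classical
  refine ⟨fun v => Nat.find (h v), fun v hv => ?_⟩
  rw [Nat.find_eq_iff]
  constructor
  · exact Nat.find_spec (h (p v))
  · intro k hk
    cases k with
    | zero => exact hv
    | succ k => exact Nat.find_min (h (p v)) (Nat.lt_of_succ_lt_succ hk)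

lemma parMat_det_one (r : V) (p : V → V) (hp : p r = r)
    (h : ∀ v, ∃ k : ℕ, p^[k] v = r) : (parMat r p).det = 1 := by
  classical
  obtain ⟨d, hd⟩ := exists_depth r p hp h
  have hT : (parMat r p).BlockTriangular (fun v => OrderDual.toDual (d v)) := by
    intro i j hij
    have hij' : d i < d j := hij
    have hne : j ≠ i := by rintro rfl; omega
    by_cases hi : i = r
    · subst hi
      simp [parMat, Pi.single_apply, hne]
    · have := hd i hi
      have hne2 : j ≠ p i := by rintro rfl; omega
      simp [parMat, hi, Pi.single_apply, hne, hne2]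
  rw [hT.det]
  apply Finset.prod_eq_one
  intro a _
  have : (parMat r p).toSquareBlock (fun v => OrderDual.toDual (d v)) a = 1 := by
    ext ⟨i, hi⟩ ⟨j, hj⟩
    have hij : d i = d j := by
      have := hi.trans hj.symm
      exact this
    simp only [toSquareBlock_def, of_apply, Matrix.one_apply, Subtype.mk.injEq]
    by_cases hir : i = r
    · subst hir
      simp [parMat, Pi.single_apply, eq_comm]
    · have := hd i hir
      have hne2 : j ≠ p i := by rintro rfl; omega
      simp [parMat, hir, Pi.single_apply, hne2, eq_comm]
  rw [this, det_one]

/-- The graph of a parent function. -/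
def parGraph (r : V) (p : V → V) : SimpleGraph V where
  Adj v w := v ≠ w ∧ ((v ≠ r ∧ p v = w) ∨ (w ≠ r ∧ p w = v))
  symm := ⟨fun v w h => ⟨h.1.symm, h.2.symm⟩⟩
  loopless := ⟨fun v h => h.1 rfl⟩

lemma parGraph_isTree (r : V) (p : V → V) (hp : p r = r)
    (h : ∀ v, ∃ k : ℕ, p^[k] v = r) : (parGraph r p).IsTree := by
  classical
  have hconn : (parGraph r p).Connected := by
    have hr : ∀ (k : ℕ) (v : V), p^[k] v = r → (parGraph r p).Reachable v r := by
      intro k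
      induction k with
      | zero => intro v hv; rw [show v = r from hv]
      | succ k ih =>
        intro v hv
        by_cases hvr : v = r
        · rw [hvr]
        · refine SimpleGraph.Reachable.trans ?_ (ih (p v) hv)
          by_cases hpv : v = p v
          · rw [← hpv]
          · exact SimpleGraph.Adj.reachable ⟨hpv, Or.inl ⟨hvr, rfl⟩⟩
    haveI : Nonempty V := ⟨r⟩
    refine ⟨fun v w => ?_⟩
    obtain ⟨k, hk⟩ := h v
    obtain ⟨j, hj⟩ := h w
    exact (hr k v hk).trans (hr j w hj).symm
  rw [SimpleGraph.isTree_iff_connected_and_card]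
  refine ⟨hconn, le_antisymm ?_ hconn.card_vert_le_card_edgeSet_add_one⟩
  have hsub : (parGraph r p).edgeSet ⊆ ((univ.erase r).image (fun v => s(v, p v)) : Finset (Sym2 V)) := by
    intro e
    induction e using Sym2.ind with
    | _ v w =>
      intro he
      rw [SimpleGraph.mem_edgeSet] at he
      simp only [coe_image, Set.mem_image, mem_coe, mem_erase, mem_univ, and_true]
      rcases he.2 with ⟨h1, h2⟩ | ⟨h1, h2⟩
      · exact ⟨v, h1, by rw [h2]⟩
      · exact ⟨w, h1, by rw [h2, Sym2.eq_swap]⟩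
  have h1 : Nat.card (parGraph r p).edgeSet ≤ ((univ.erase r).image (fun v => s(v, p v))).card := by
    rw [Nat.card_coe_set_eq, ← Set.ncard_coe_finset]
    exact Set.ncard_le_ncard hsub
  have h2 := (Finset.card_image_le (s := univ.erase r) (f := fun v => s(v, p v)))
  rw [Finset.card_erase_of_mem (mem_univ _), card_univ] at h2
  have h3 : 0 < Fintype.card V := Fintype.card_pos_iff.mpr ⟨r⟩
  rw [Nat.card_eq_fintype_card (α := V)]
  omega

lemma parGraph_inj (r : V) (p q : V → V) (hp : p r = r) (hq : q r = r)
    (h : ∀ v, ∃ k : ℕ, p^[k] v = r) (hpv : ∀ v, v ≠ r → p v ≠ v)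
    (he : parGraph r p = parGraph r q) : p = q := by
  obtain ⟨d, hd⟩ := exists_depth r p hp h
  have key : ∀ k v, d v = k → p v = q v := by
    intro k
    induction k using Nat.strong_induction_on with
    | _ k ih =>
      intro v hv
      by_cases hvr : v = r
      · rw [hvr, hp, hq]
      · have h1 : (parGraph r p).Adj v (p v) := ⟨(hpv v hvr).symm, Or.inl ⟨hvr, rfl⟩⟩
        rw [he] at h1
        have hdv := hd v hvr
        rcases h1.2 with ⟨_, h2⟩ | ⟨h2, h3⟩
        · exact h2.symm
        · have h4 := ih (d (p v)) (by omega) (p v) rfl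
          have h5 := hd (p v) h2
          rw [h4, h3] at h5
          omega
  funext v
  exact key _ v rfl

lemma parGraph_surj (r : V) (G T : SimpleGraph V) (hTG : T ≤ G) (hT : T.IsTree) :
    ∃ p : V → V, p r = r ∧ (∀ v, v ≠ r → G.Adj v (p v)) ∧ (∀ v, ∃ k : ℕ, p^[k] v = r) ∧
      parGraph r p = T := by
  classical
  have hex : ∀ v, ∃ w, v ≠ r → (T.Adj v w ∧ T.dist w r < T.dist v r) := by
    intro v
    by_cases hv : v = r
    · exact ⟨v, fun h => absurd hv h⟩
    · obtain ⟨W, hW⟩ := hT.1.exists_walk_length_eq_dist v r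
      cases W with
      | nil => exact absurd rfl hv
      | cons hadj W' =>
        refine ⟨_, fun _ => ⟨hadj, ?_⟩⟩
        rw [← hW, SimpleGraph.Walk.length_cons]
        exact Nat.lt_succ_of_le (SimpleGraph.dist_le W')
  choose f hf using hex
  set p : V → V := fun v => if v = r then r else f v with hpdef
  have hpr : p r = r := by simp [hpdef]
  have hpf : ∀ v, v ≠ r → p v = f v := fun v hv => by simp [hpdef, hv]
  have hreach : ∀ v, ∃ k : ℕ, p^[k] v = r := by
    have : ∀ n v, T.dist v r = n → ∃ k : ℕ, p^[k] v = r := by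
      intro n
      induction n using Nat.strong_induction_on with
      | _ n ih =>
        intro v hv
        by_cases hvr : v = r
        · exact ⟨0, hvr⟩
        · obtain ⟨k, hk⟩ := ih (T.dist (p v) r) (by rw [← hv, hpf v hvr]; exact (hf v hvr).2) (p v) rfl
          exact ⟨k + 1, hk⟩
    exact fun v => this _ v rfl
  refine ⟨p, hpr, fun v hv => hTG (by rw [hpf v hv]; exact (hf v hv).1), hreach, ?_⟩
  have hle : parGraph r p ≤ T := by
    intro v w hvw
    rcases hvw.2 with ⟨h1, h2⟩ | ⟨h1, h2⟩
    · rw [← h2, hpf v h1]; exact (hf v h1).1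
    · rw [← h2, hpf w h1]; exact (hf w h1).1.symm
  have hmin := SimpleGraph.isTree_iff_minimal_connected.mp hT
  exact le_antisymm hle (hmin.2 (parGraph_isTree r p hpr hreach).1 hle)

theorem matrix_tree_row (G : SimpleGraph V) [DecidableRel G.Adj] (r : V) :
    (Set.ncard {T : SimpleGraph V | T ≤ G ∧ T.IsTree} : ℝ) =
      ((G.lapMatrix ℝ).updateRow r (Pi.single r 1)).det := by
  classical
  set A : V → Finset V := fun v => if v = r then {r} else G.neighborFinset v with hA
  have hmem : ∀ p, p ∈ Fintype.piFinset A ↔ p r = r ∧ ∀ v, v ≠ r → G.Adj v (p v) := by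
    intro p
    rw [Fintype.mem_piFinset]
    constructor
    · intro h
      refine ⟨by simpa [hA] using h r, fun v hv => by simpa [hA, hv] using h v⟩
    · rintro ⟨h1, h2⟩ v
      by_cases hv : v = r
      · subst hv; simp [hA, h1]
      · simpa [hA, hv] using h2 v hv
  have hexp : ((G.lapMatrix ℝ).updateRow r (Pi.single r 1)).det =
      ∑ p ∈ Fintype.piFinset A, (parMat r p).det := by
    have h1 : ((G.lapMatrix ℝ).updateRow r (Pi.single r 1)) =
        fun v => ∑ w ∈ A v, (if v = r then Pi.single r 1 else Pi.single v 1 - Pi.single w 1 : V → ℝ) := by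
      funext v
      by_cases hv : v = r
      · subst hv
        simp [hA]
      · funext j
        rw [updateRow_ne hv]
        simp only [hA, hv, if_false, Finset.sum_apply, Pi.sub_apply, Pi.single_apply,
          Finset.sum_sub_distrib]
        simp only [SimpleGraph.lapMatrix, SimpleGraph.degMatrix, Matrix.sub_apply, diagonal_apply,
          SimpleGraph.adjMatrix_apply]
        simp [Finset.sum_ite_eq, eq_comm]
    have h2 := (Matrix.detRowAlternating (n := V) (R := ℝ)).toMultilinearMap.map_sum_finset
      (fun v w => (if v = r then Pi.single r 1 else Pi.single v 1 - Pi.single w 1 : V → ℝ)) A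
    rw [h1]
    exact h2
  rw [hexp]
  have hsum : ∑ p ∈ Fintype.piFinset A, (parMat r p).det =
      (((Fintype.piFinset A).filter (fun p => ∀ v, ∃ k : ℕ, p^[k] v = r)).card : ℝ) := by
    rw [Finset.card_filter, Nat.cast_sum]
    refine Finset.sum_congr rfl fun p hp => ?_
    have hp' := (hmem p).mp hp
    by_cases h : ∀ v, ∃ k : ℕ, p^[k] v = r
    · rw [parMat_det_one r p hp'.1 h, if_pos h, Nat.cast_one]
    · rw [parMat_det_zero r p hp'.1 h, if_neg h, Nat.cast_zero]
  rw [hsum]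
  have himg : {T : SimpleGraph V | T ≤ G ∧ T.IsTree} = parGraph r ''
      (((Fintype.piFinset A).filter (fun p => ∀ v, ∃ k : ℕ, p^[k] v = r) : Finset (V → V)) : Set (V → V)) := by
    ext T
    simp only [Set.mem_ofPred_eq, Set.mem_image, mem_coe, mem_filter, hmem]
    constructor
    · rintro ⟨h1, h2⟩
      obtain ⟨p, a, b, c, d⟩ := parGraph_surj r G T h1 h2
      exact ⟨p, ⟨⟨a, b⟩, c⟩, d⟩
    · rintro ⟨p, ⟨⟨a, b⟩, c⟩, rfl⟩
      refine ⟨?_, parGraph_isTree r p a c⟩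
      intro v w hvw
      rcases hvw.2 with ⟨h1, h2⟩ | ⟨h1, h2⟩
      · rw [← h2]; exact b v h1
      · rw [← h2]; exact (b w h1).symm
  rw [himg, Set.InjOn.ncard_image, Set.ncard_coe_finset]
  intro p hp q hq hpq
  simp only [mem_coe, mem_filter, hmem] at hp hq
  exact parGraph_inj r p q hp.1.1 hq.1.1 hp.2 (fun v hv h => (hp.1.2 v hv).ne h.symm) hpq

lemma det_add_ones (M : Matrix V V ℝ) (r : V) (h1 : ∀ i, ∑ j, M i j = 0) (h2 : ∀ j, ∑ i, M i j = 0) :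
    (M + Matrix.of (fun _ _ => (1 : ℝ))).det =
      (Fintype.card V : ℝ) ^ 2 * (M.updateRow r (Pi.single r 1)).det := by
  set o : V → ℝ := fun _ => 1 with ho
  set e : V → ℝ := Pi.single r 1 with he
  have hdet : ∀ u v : V → ℝ, (1 + vecMulVec u v).det = 1 + v ⬝ᵥ u := by
    intro u v
    rw [← Matrix.det_one_add_replicateCol_mul_replicateRow (ι := Unit) u v, vecMulVec_eq Unit]
  have heo : e ⬝ᵥ o = 1 := by simp [he, ho]
  have hoe : o ⬝ᵥ e = 1 := by simp [he, ho]
  have hee : e ⬝ᵥ e = 1 := by simp [he]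
  have hoo : o ⬝ᵥ o = Fintype.card V := by simp [ho, dotProduct]
  have hMo : M *ᵥ o = 0 := by funext i; simpa [mulVec, dotProduct, ho] using h1 i
  have hoM : o ᵥ* M = 0 := by funext i; simpa [vecMul, dotProduct, ho] using h2 i
  have hB : M.updateRow r e = (1 + vecMulVec e (o - e)) * (M + vecMulVec e e) := by
    have : M.updateRow r e = M - vecMulVec e (e ᵥ* M) + vecMulVec e e := by
      ext i j
      by_cases hi : i = r
      · subst hi
        simp [he, vecMulVec_apply]
      · simp [he, vecMulVec_apply, hi]
    rw [this, add_mul, one_mul, mul_add, vecMulVec_mul, vecMulVec_mul_vecMulVec, sub_vecMul, hoM,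
      sub_dotProduct, hoe, hee]
    simp only [vecMulVec_sub, zero_sub, vecMulVec_neg, sub_self, zero_smul]
    simp
    abel
  have hJ : M + Matrix.of (fun _ _ => (1 : ℝ)) =
      (1 + vecMulVec (o - e) o) * ((M + vecMulVec e e) * (1 + vecMulVec o (o - e))) := by
    have hj : Matrix.of (fun _ _ => (1 : ℝ)) = (vecMulVec o o : Matrix V V ℝ) := by
      ext i j; simp [vecMulVec_apply, ho]
    have hx : (M + vecMulVec e e) * (1 + vecMulVec o (o - e)) = M + vecMulVec e o := by
      rw [mul_add, mul_one, mul_vecMulVec, add_mulVec, hMo, vecMulVec_mulVec, heo]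
      ext i j
      simp [vecMulVec_apply]
      ring
    rw [hx, hj, add_mul, one_mul, vecMulVec_mul, vecMul_add, hoM, vecMul_vecMulVec, hoe]
    ext i j
    simp [vecMulVec_apply]
    ring
  rw [hJ, hB, det_mul, det_mul, det_mul, hdet, hdet, hdet]
  simp only [sub_dotProduct, dotProduct_sub, heo, hoe, hee, hoo]
  ring

end MatrixTree

section Grid

lemma ncard_subgraph_eq {V : Type*} (G : SimpleGraph V) :
    Set.ncard {H : G.Subgraph | H.IsSpanning ∧ H.coe.IsTree} =
      Set.ncard {T : SimpleGraph V | T ≤ G ∧ T.IsTree} := by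
  have himg : {T : SimpleGraph V | T ≤ G ∧ T.IsTree} =
      (fun H : G.Subgraph => H.spanningCoe) '' {H : G.Subgraph | H.IsSpanning ∧ H.coe.IsTree} := by
    ext T
    constructor
    · rintro ⟨h1, h2⟩
      refine ⟨SimpleGraph.toSubgraph T h1, ⟨SimpleGraph.toSubgraph.isSpanning T h1, ?_⟩, ?_⟩
      · rw [← (SimpleGraph.Subgraph.spanningCoeEquivCoeOfSpanning _
          (SimpleGraph.toSubgraph.isSpanning T h1)).isTree_iff]
        exact h2
      · rfl
    · rintro ⟨H, ⟨h1, h2⟩, rfl⟩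
      exact ⟨H.spanningCoe_le,
        (SimpleGraph.Subgraph.spanningCoeEquivCoeOfSpanning _ h1).isTree_iff.mpr h2⟩
  rw [himg, Set.InjOn.ncard_image]
  intro H hH K hK hHK
  have h1 : H.verts = K.verts := by
    rw [SimpleGraph.Subgraph.isSpanning_iff.mp hH.1, SimpleGraph.Subgraph.isSpanning_iff.mp hK.1]
  refine SimpleGraph.Subgraph.ext h1 ?_
  have := congrArg SimpleGraph.Adj hHK
  exact this

open Polynomial in
lemma U_eval_prod (m : ℕ) (x : ℝ) : (Chebyshev.U ℝ m).eval x =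
    ∏ j ∈ range m, (2 * x - 2 * Real.cos ((j + 1) * Real.pi / (m + 1))) := by
  have hroots := Chebyshev.roots_U_real m
  have hinj : Set.InjOn (fun k : ℕ => Real.cos ((k + 1) * Real.pi / (m + 1))) (range m : Set ℕ) := by
    have hpi := Real.pi_pos
    have hm : (0 : ℝ) < m + 1 := by positivity
    have hb : ∀ k ∈ (range m : Set ℕ), (((k : ℕ) : ℝ) + 1) * Real.pi / (m + 1) ∈ Set.Icc 0 Real.pi := by
      intro k hk
      have hk' : (k : ℝ) + 1 ≤ m := by
        have := Finset.mem_range.mp (Finset.mem_coe.mp hk)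
        exact_mod_cast this
      constructor
      · positivity
      · rw [div_le_iff₀ hm]; nlinarith
    intro a ha b hb' hab
    have h := Real.injOn_cos (hb a ha) (hb b hb') hab
    field_simp at h
    have h' : (a : ℝ) = b := by linarith
    exact_mod_cast h'
  have hcard : Multiset.card (Chebyshev.U ℝ m).roots = (Chebyshev.U ℝ m).natDegree := by
    rw [hroots, Chebyshev.natDegree_U_natCast, Finset.card_val, Finset.card_image_of_injOn hinj,
      card_range]
  have h := C_leadingCoeff_mul_prod_multiset_X_sub_C hcard
  rw [Chebyshev.leadingCoeff_U_natCast] at h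
  rw [← h, hroots, eval_mul, eval_C, eval_multiset_prod, Multiset.map_map]
  have h3 : (Multiset.map ((fun p => eval x p) ∘ fun a => (X : ℝ[X]) - C a)
      (Finset.image (fun k : ℕ => Real.cos ((k + 1) * Real.pi / (m + 1))) (range m)).val).prod =
      ∏ a ∈ Finset.image (fun k : ℕ => Real.cos ((k + 1) * Real.pi / (m + 1))) (range m), (x - a) := by
    rw [Finset.prod]
    simp [Function.comp_def]
  rw [show ((Multiset.map (eval x ∘ fun a => (X : ℝ[X]) - C a)
      (Finset.image (fun k : ℕ => Real.cos ((k + 1) * Real.pi / (m + 1))) (range m)).val).prod) = _ from h3,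
    Finset.prod_image hinj]
  rw [← Finset.card_range m, ← Finset.prod_const, Finset.card_range, ← Finset.prod_mul_distrib]
  refine Finset.prod_congr rfl fun j _ => by ring

/-- Path Laplacian eigenvalues. -/
noncomputable def pev (l i : ℕ) : ℝ := 2 - 2 * Real.cos (i * Real.pi / l)

/-- Path Laplacian eigenvectors. -/
noncomputable def pevec (l i a : ℕ) : ℝ := Real.cos (i * Real.pi * (2 * a + 1) / (2 * l))

/-- Eigenvector matrix. -/
noncomputable def pmat (l : ℕ) : Matrix (Fin l) (Fin l) ℝ := Matrix.of fun a i => pevec l i a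

lemma pev_prod (m : ℕ) : ∏ j : Fin m, pev (m + 1) (j + 1) = m + 1 := by
  have h := U_eval_prod m 1
  rw [Polynomial.Chebyshev.U_eval_one] at h
  rw [Fin.prod_univ_eq_prod_range (fun j => pev (m + 1) (j + 1)) m]
  push_cast at h
  rw [h]
  refine Finset.prod_congr rfl fun j _ => ?_
  simp [pev]

lemma path_sum (l : ℕ) [DecidableRel (SimpleGraph.pathGraph l).Adj] (a : Fin l) (c : ℕ → ℝ) :
    ∑ b : Fin l, (if (SimpleGraph.pathGraph l).Adj a b then c b else 0) =
      (if (a : ℕ) + 1 < l then c (a + 1) else 0) + (if 0 < (a : ℕ) then c (a - 1) else 0) := by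
  have h1 : ∀ b : Fin l, (if (SimpleGraph.pathGraph l).Adj a b then c b else 0) =
      (fun b : ℕ => (if (a : ℕ) + 1 = b then c b else 0) +
        (if (a : ℕ) - 1 = b then (if 0 < (a : ℕ) then c b else 0) else 0)) b := by
    intro b
    simp only [SimpleGraph.pathGraph_adj]
    split_ifs <;> first | omega | simp
  rw [Finset.sum_congr rfl fun b _ => h1 b, Fin.sum_univ_eq_sum_range
    (fun b : ℕ => (if (a : ℕ) + 1 = b then c b else 0) +
        (if (a : ℕ) - 1 = b then (if 0 < (a : ℕ) then c b else 0) else 0)) l, Finset.sum_add_distrib,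
    Finset.sum_ite_eq, Finset.sum_ite_eq]
  have := a.2
  simp only [mem_range, show (a : ℕ) - 1 < l by omega, if_true]

lemma path_lap_eigen (l : ℕ) [DecidableRel (SimpleGraph.pathGraph l).Adj] (i : ℕ) :
    (SimpleGraph.pathGraph l).lapMatrix ℝ *ᵥ (fun a : Fin l => pevec l i a) =
      pev l i • (fun a : Fin l => pevec l i a) := by
  classical
  funext a
  have hl : 0 < l := a.pos
  have hl' : (l : ℝ) ≠ 0 := by positivity
  rw [SimpleGraph.lapMatrix_mulVec_apply, SimpleGraph.degree_eq_sum_if_adj, Finset.sum_mul]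
  rw [← SimpleGraph.adjMatrix_mulVec_apply]
  simp only [mulVec, dotProduct, SimpleGraph.adjMatrix_apply, ite_mul, one_mul, zero_mul]
  rw [path_sum l a (fun _ => pevec l i a), path_sum l a (fun b => pevec l i b)]
  simp only [Pi.smul_apply, smul_eq_mul]
  -- extend
  have hlow : (a : ℕ) = 0 → pevec l i a = Real.cos (i * Real.pi * (2 * (a : ℕ) - 1) / (2 * l)) := by
    intro h
    simp only [pevec, h]
    rw [← Real.cos_neg]
    congr 1
    push_cast
    ring
  have hhigh : ¬ ((a : ℕ) + 1 < l) →
      pevec l i a = Real.cos (i * Real.pi * (2 * (a : ℕ) + 3) / (2 * l)) := by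
    intro h
    have h' : (l : ℝ) = (a : ℕ) + 1 := by
      have : l = (a : ℕ) + 1 := by have := a.2; omega
      exact_mod_cast this
    simp only [pevec]
    have e1 : (i : ℝ) * Real.pi * (2 * (a : ℕ) + 3) / (2 * l) = i * (2 * Real.pi)
        - i * Real.pi * (2 * (a : ℕ) + 1) / (2 * l) := by
      rw [h']
      have : ((a : ℕ) : ℝ) + 1 ≠ 0 := by positivity
      field_simp
      ring
    rw [e1, Real.cos_nat_mul_two_pi_sub]
  have hup : (if (a : ℕ) + 1 < l then pevec l i a else 0) -
      (if (a : ℕ) + 1 < l then pevec l i (a + 1) else 0) =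
      pevec l i a - Real.cos (i * Real.pi * (2 * (a : ℕ) + 3) / (2 * l)) := by
    split_ifs with h
    · congr 1
      simp only [pevec]
      congr 1
      push_cast
      ring
    · rw [← hhigh h]; simp
  have hdown : (if 0 < (a : ℕ) then pevec l i a else 0) -
      (if 0 < (a : ℕ) then pevec l i (a - 1) else 0) =
      pevec l i a - Real.cos (i * Real.pi * (2 * (a : ℕ) - 1) / (2 * l)) := by
    split_ifs with h
    · congr 1
      simp only [pevec]
      congr 1
      rw [Nat.cast_sub h]
      push_cast
      ring
    · rw [← hlow (by omega)]; simp
  have hsum : Real.cos (i * Real.pi * (2 * (a : ℕ) + 3) / (2 * l)) +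
      Real.cos (i * Real.pi * (2 * (a : ℕ) - 1) / (2 * l)) =
      2 * pevec l i a * Real.cos (i * Real.pi / l) := by
    have e1 : (i : ℝ) * Real.pi * (2 * (a : ℕ) + 3) / (2 * l) =
      i * Real.pi * (2 * (a : ℕ) + 1) / (2 * l) + i * Real.pi / l := by field_simp; ring
    have e2 : (i : ℝ) * Real.pi * (2 * (a : ℕ) - 1) / (2 * l) =
      i * Real.pi * (2 * (a : ℕ) + 1) / (2 * l) - i * Real.pi / l := by field_simp; ring
    rw [e1, e2, Real.cos_add, Real.cos_sub, pevec]
    ring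
  rw [pev]
  linarith

lemma pev_inj (l : ℕ) : Function.Injective (fun i : Fin l => pev l i) := by
  intro i j hij
  have hl : 0 < l := i.pos
  have hl' : (0 : ℝ) < l := by exact_mod_cast hl
  have hpi := Real.pi_pos
  have hb : ∀ k : Fin l, ((k : ℕ) : ℝ) * Real.pi / l ∈ Set.Icc 0 Real.pi := by
    intro k
    have hk' : ((k : ℕ) : ℝ) ≤ l := by exact_mod_cast k.2.le
    constructor
    · positivity
    · rw [div_le_iff₀ hl']; nlinarith
  simp only [pev] at hij
  have h := Real.injOn_cos (hb i) (hb j) (by linarith)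
  field_simp at h
  exact Fin.ext (by exact_mod_cast h)

lemma pevec_ne_zero (l : ℕ) (i : Fin l) : (fun a : Fin l => pevec l i a) ≠ 0 := by
  intro h
  have hl : 0 < l := i.pos
  have hl' : (0 : ℝ) < l := by exact_mod_cast hl
  have h0 := congrFun h ⟨0, hl⟩
  simp only [pevec, Pi.zero_apply] at h0
  have hpi := Real.pi_pos
  have hi : ((i : ℕ) : ℝ) < l := by exact_mod_cast i.2
  have : 0 < Real.cos ((i : ℕ) * Real.pi * (2 * (0 : ℕ) + 1) / (2 * l)) := by
    apply Real.cos_pos_of_mem_Ioo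
    constructor
    · have : 0 ≤ ((i : ℕ) : ℝ) * Real.pi * (2 * (0 : ℕ) + 1) / (2 * l) := by positivity
      linarith
    · rw [div_lt_iff₀ (by positivity)]
      push_cast
      nlinarith
  linarith

lemma pmat_mul (l : ℕ) [DecidableRel (SimpleGraph.pathGraph l).Adj] :
    (SimpleGraph.pathGraph l).lapMatrix ℝ * pmat l =
      pmat l * diagonal (fun i : Fin l => pev l i) := by
  classical
  ext a i
  have h := congrFun (path_lap_eigen l (i : ℕ)) a
  rw [mul_diagonal]
  simp only [Matrix.mul_apply, pmat, of_apply]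
  simp only [mulVec, dotProduct, Pi.smul_apply, smul_eq_mul] at h
  rw [h, mul_comm]

lemma pmat_det (l : ℕ) : (pmat l).det ≠ 0 := by
  classical
  have h := Module.End.eigenvectors_linearIndependent'
    (Matrix.toLin' ((SimpleGraph.pathGraph l).lapMatrix ℝ)) (fun i : Fin l => pev l i) (pev_inj l)
    (fun i : Fin l => fun a : Fin l => pevec l i a) (by
      intro i
      rw [Module.End.hasEigenvector_iff]
      refine ⟨?_, pevec_ne_zero l i⟩
      rw [Module.End.mem_eigenspace_iff, Matrix.toLin'_apply]
      exact path_lap_eigen l i)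
  have h2 : IsUnit (pmat l) := by
    rw [← Matrix.linearIndependent_cols_iff_isUnit]
    exact h
  exact ((Matrix.isUnit_iff_isUnit_det _).mp h2).ne_zero

lemma pevec_zero (l a : ℕ) : pevec l 0 a = 1 := by simp [pevec]

lemma pev_zero (l : ℕ) : pev l 0 = 0 := by simp [pev]

lemma lap_col_sum {V : Type*} [Fintype V] [DecidableEq V] (G : SimpleGraph V) [DecidableRel G.Adj]
    (i : V) : ∑ j, G.lapMatrix ℝ i j = 0 := by
  have := congrFun (G.lapMatrix_mulVec_const_eq_zero (R := ℝ)) i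
  simpa [mulVec, dotProduct] using this

lemma lap_row_sum {V : Type*} [Fintype V] [DecidableEq V] (G : SimpleGraph V) [DecidableRel G.Adj]
    (j : V) : ∑ i, G.lapMatrix ℝ i j = 0 := by
  rw [← lap_col_sum G j]
  refine Finset.sum_congr rfl fun i _ => ?_
  exact (G.isSymm_lapMatrix (R := ℝ)).apply j i

lemma pevec_sum (l : ℕ) (i : Fin (l + 1)) :
    ∑ a : Fin (l + 1), pevec (l + 1) i a = if i = 0 then (l : ℝ) + 1 else 0 := by
  classical
  split_ifs with h
  · subst h
    simp [pevec_zero]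
  · have h1 : ∑ a : Fin (l + 1), ((SimpleGraph.pathGraph (l + 1)).lapMatrix ℝ *ᵥ
        (fun a : Fin (l + 1) => pevec (l + 1) i a)) a = 0 := by
      simp only [mulVec, dotProduct]
      rw [Finset.sum_comm]
      apply Finset.sum_eq_zero
      intro b _
      rw [← Finset.sum_mul, lap_row_sum, zero_mul]
    rw [path_lap_eigen] at h1
    simp only [Pi.smul_apply, smul_eq_mul, ← Finset.mul_sum] at h1
    rcases mul_eq_zero.mp h1 with h2 | h2
    · exfalso
      apply h
      apply pev_inj (l + 1)
      simp only [h2, Fin.val_zero, pev_zero]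
    · exact h2

open Kronecker in
lemma lap_boxProd {α β : Type*} [Fintype α] [Fintype β] [DecidableEq α] [DecidableEq β]
    (G : SimpleGraph α) (H : SimpleGraph β) [DecidableRel G.Adj] [DecidableRel H.Adj]
    [DecidableRel (G.boxProd H).Adj] :
    (G.boxProd H).lapMatrix ℝ = G.lapMatrix ℝ ⊗ₖ (1 : Matrix β β ℝ) +
      (1 : Matrix α α ℝ) ⊗ₖ H.lapMatrix ℝ := by
  ext ⟨a, b⟩ ⟨a', b'⟩
  have hdeg := SimpleGraph.degree_boxProd (G := G) (H := H) (a, b)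
  simp only [SimpleGraph.lapMatrix, SimpleGraph.degMatrix, Matrix.sub_apply, diagonal_apply,
    SimpleGraph.adjMatrix_apply, Matrix.add_apply, kroneckerMap_apply, Matrix.one_apply,
    SimpleGraph.boxProd_adj, Prod.mk.injEq]
  by_cases h1 : a = a'
  · subst h1
    by_cases h2 : b = b'
    · subst h2
      simp only [and_self, if_true, SimpleGraph.irrefl, false_and, or_self, if_false, sub_zero,
        mul_one, one_mul]
      rw [← Nat.cast_add]
      congr 1
      convert hdeg
    · simp [h2]
  · by_cases h2 : b = b'
    · subst h2
      simp [h1]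
    · simp [h1, h2]

open Kronecker in
lemma grid_det (l m : ℕ) [DecidableRel (gridGraph (l + 1) (m + 1)).Adj] :
    ((gridGraph (l + 1) (m + 1)).lapMatrix ℝ + Matrix.of (fun _ _ => (1 : ℝ))).det =
      ∏ x : Fin (l + 1) × Fin (m + 1), (pev (l + 1) x.1 + pev (m + 1) x.2 +
        if x = (0, 0) then ((l : ℝ) + 1) * (m + 1) else 0) := by
  classical
  have hL : (gridGraph (l + 1) (m + 1)).lapMatrix ℝ =
      (SimpleGraph.pathGraph (l + 1)).lapMatrix ℝ ⊗ₖ (1 : Matrix (Fin (m + 1)) (Fin (m + 1)) ℝ) +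
      (1 : Matrix (Fin (l + 1)) (Fin (l + 1)) ℝ) ⊗ₖ (SimpleGraph.pathGraph (m + 1)).lapMatrix ℝ := by
    letI : DecidableRel ((SimpleGraph.pathGraph (l + 1)).boxProd
        (SimpleGraph.pathGraph (m + 1))).Adj :=
      inferInstanceAs (DecidableRel (gridGraph (l + 1) (m + 1)).Adj)
    exact lap_boxProd (SimpleGraph.pathGraph (l + 1)) (SimpleGraph.pathGraph (m + 1))
  set W := pmat (l + 1) ⊗ₖ pmat (m + 1) with hW
  have hWdet : W.det ≠ 0 := by
    rw [hW, det_kronecker]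
    exact mul_ne_zero (pow_ne_zero _ (pmat_det _)) (pow_ne_zero _ (pmat_det _))
  set D : Fin (l + 1) × Fin (m + 1) → ℝ := fun x => (pev (l + 1) x.1 + pev (m + 1) x.2 +
        if x = (0, 0) then ((l : ℝ) + 1) * (m + 1) else 0) with hD
  have key : ((gridGraph (l + 1) (m + 1)).lapMatrix ℝ + Matrix.of (fun _ _ => (1 : ℝ))) * W =
      W * diagonal D := by
    have h1 : (gridGraph (l + 1) (m + 1)).lapMatrix ℝ * W =
        W * diagonal (fun x => pev (l + 1) x.1 + pev (m + 1) x.2) := by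
      rw [hL, add_mul, hW, ← mul_kronecker_mul, ← mul_kronecker_mul, one_mul, one_mul,
        pmat_mul, pmat_mul]
      ext ⟨a, b⟩ ⟨i, j⟩
      simp only [Matrix.add_apply, kroneckerMap_apply, mul_diagonal]
      ring
    have h2 : Matrix.of (fun _ _ => (1 : ℝ)) * W =
        W * diagonal (fun x => if x = (0, 0) then ((l : ℝ) + 1) * (m + 1) else 0) := by
      ext ⟨a, b⟩ ⟨i, j⟩
      rw [mul_diagonal]
      simp only [Matrix.mul_apply, hW, kroneckerMap_apply, of_apply, one_mul, pmat,
        Fintype.sum_prod_type, ← Finset.mul_sum, ← Finset.sum_mul]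
      rw [pevec_sum, pevec_sum]
      by_cases hi : i = 0
      · by_cases hj : j = 0
        · subst hi hj
          simp [pevec_zero]
        · simp [hj]
      · simp [hi]
    rw [add_mul, h1, h2, ← mul_add, diagonal_add]
  have h3 := congrArg Matrix.det key
  rw [det_mul, det_mul, det_diagonal, mul_comm] at h3
  exact mul_left_cancel₀ hWdet h3

theorem gridTau_formula (l m : ℕ) : (gridTau (l + 1) (m + 1) : ℝ) =
    ∏ i : Fin l, ∏ j : Fin m, (pev (l + 1) (i + 1) + pev (m + 1) (j + 1)) := by
  classical
  have h1 := grid_det l m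
  rw [det_add_ones _ ((0, 0) : Fin (l + 1) × Fin (m + 1)) (lap_col_sum _) (lap_row_sum _),
    ← matrix_tree_row, ← ncard_subgraph_eq] at h1
  change _ ^ 2 * (gridTau (l + 1) (m + 1) : ℝ) = _ at h1
  rw [Fintype.prod_prod_type] at h1
  simp only [Fin.prod_univ_succ, Fin.val_zero, pev_zero, Fin.val_succ, Fintype.card_prod,
    Fintype.card_fin, Prod.mk.injEq, Fin.succ_ne_zero, and_false, false_and, if_false, and_self, if_true,
    add_zero, zero_add] at h1
  rw [Finset.prod_mul_distrib, pev_prod, pev_prod] at h1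
  push_cast at h1
  have h2 : ((l : ℝ) + 1) * (m + 1) ≠ 0 := by positivity
  have h3 : (((l : ℝ) + 1) * (m + 1)) ^ 2 ≠ 0 := pow_ne_zero _ h2
  apply mul_left_cancel₀ h3
  rw [h1]
  ring

end Grid

section Analysis

/-- The hyperbolic angle attached to the path eigenvalue. -/
noncomputable def hang (l i : ℕ) : ℝ := 2 * Real.arsinh (Real.sin ((i + 1) * Real.pi / (2 * (l + 1))))

lemma sin_lower (l i : ℕ) (hi : i < l) :
    ((i : ℝ) + 1) / (l + 1) ≤ Real.sin ((i + 1) * Real.pi / (2 * (l + 1))) := by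
  have hpi := Real.pi_pos
  have hl : (0 : ℝ) < l + 1 := by positivity
  have hi' : (i : ℝ) + 1 ≤ l := by exact_mod_cast hi
  have h := Real.mul_le_sin (x := (i + 1) * Real.pi / (2 * (l + 1))) (by positivity) (by
    rw [div_le_div_iff₀ (by positivity) (by positivity)]; nlinarith)
  refine le_trans (le_of_eq ?_) h
  field_simp

lemma hang_pos (l i : ℕ) (hi : i < l) : 0 < hang l i := by
  have h := sin_lower l i hi
  have h2 : (0 : ℝ) < ((i : ℝ) + 1) / (l + 1) := by positivity
  have := Real.arsinh_pos_iff.mpr (lt_of_lt_of_le h2 h)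
  unfold hang
  linarith

lemma cosh_hang (l i : ℕ) : Real.cosh (hang l i) = 1 + pev (l + 1) (i + 1) / 2 := by
  have h1 : ((i : ℝ) + 1) * Real.pi / (l + 1) = 2 * ((i + 1) * Real.pi / (2 * (l + 1))) := by
    have : (l : ℝ) + 1 ≠ 0 := by positivity
    field_simp
  rw [hang, Real.cosh_two_mul, Real.cosh_sq, Real.sinh_arsinh, pev]
  push_cast
  rw [h1, Real.cos_two_mul, Real.cos_sq']
  ring

/-- Product of the `2 sinh` of the angles. -/
noncomputable def PP (l : ℕ) : ℝ := ∏ i ∈ range l, (2 * Real.sinh (hang l i))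

lemma two_sinh_pos {x : ℝ} (hx : 0 < x) : 0 < 2 * Real.sinh x := by
  have := Real.sinh_pos_iff.mpr hx
  linarith

lemma PP_pos (l : ℕ) : 0 < PP l :=
  Finset.prod_pos fun i hi => two_sinh_pos (hang_pos l i (mem_range.mp hi))

lemma tau_symm (l m : ℕ) : gridTau (l + 1) (m + 1) = gridTau (m + 1) (l + 1) := by
  have h : (gridTau (l + 1) (m + 1) : ℝ) = gridTau (m + 1) (l + 1) := by
    rw [gridTau_formula, gridTau_formula, Finset.prod_comm]
    refine Finset.prod_congr rfl fun i _ => Finset.prod_congr rfl fun j _ => add_comm _ _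
  exact_mod_cast h

lemma tau_mul_PP (l m : ℕ) : (gridTau (l + 1) (m + 1) : ℝ) * PP l =
    ∏ i ∈ range l, (2 * Real.sinh ((m + 1) * hang l i)) := by
  rw [gridTau_formula, Fin.prod_univ_eq_prod_range
    (fun i => ∏ j : Fin m, (pev (l + 1) (i + 1) + pev (m + 1) (j + 1))) l, PP,
    ← Finset.prod_mul_distrib]
  refine Finset.prod_congr rfl fun i _ => ?_
  rw [Fin.prod_univ_eq_prod_range (fun j => pev (l + 1) (i + 1) + pev (m + 1) (j + 1)) m]
  have h1 : ∏ j ∈ range m, (pev (l + 1) (i + 1) + pev (m + 1) (j + 1)) =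
      (Polynomial.Chebyshev.U ℝ m).eval (Real.cosh (hang l i)) := by
    rw [U_eval_prod, cosh_hang]
    refine Finset.prod_congr rfl fun j _ => ?_
    simp only [pev]
    push_cast
    ring
  have h2 := Polynomial.Chebyshev.U_real_cosh (hang l i) m
  push_cast at h2
  rw [h1, ← h2]
  ring

lemma PP_sq (l : ℕ) : PP l ^ 2 = (l + 1) * (Polynomial.Chebyshev.U ℝ l).eval 3 := by
  rw [← pev_prod l, Fin.prod_univ_eq_prod_range (fun j => pev (l + 1) (j + 1)) l, U_eval_prod,
    ← Finset.prod_mul_distrib, PP, ← Finset.prod_pow]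
  refine Finset.prod_congr rfl fun i _ => ?_
  have h := cosh_hang l i
  have h2 := Real.cosh_sq (hang l i)
  have h3 : (2 * Real.sinh (hang l i)) ^ 2 = 4 * (Real.cosh (hang l i) ^ 2 - 1) := by
    rw [h2]; ring
  rw [h3, h]
  simp only [pev]
  push_cast
  ring

lemma U_three (k : ℕ) : 0 < (Polynomial.Chebyshev.U ℝ k).eval 3 ∧
    5 * (Polynomial.Chebyshev.U ℝ k).eval 3 ≤ (Polynomial.Chebyshev.U ℝ (k + 1 : ℕ)).eval 3 := by
  induction k with
  | zero => norm_num
  | succ k ih =>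
    have h := Polynomial.Chebyshev.U_add_two ℝ k
    have h2 := congrArg (Polynomial.eval (3 : ℝ)) h
    simp only [Polynomial.eval_sub, Polynomial.eval_mul, Polynomial.eval_ofNat, Polynomial.eval_X] at h2
    push_cast at ih ⊢
    rw [show (k : ℤ) + 1 + 1 = k + 2 by ring, h2]
    obtain ⟨h3, h4⟩ := ih
    constructor <;> linarith

lemma PP_step (k : ℕ) : 5 * PP k ^ 2 ≤ PP (k + 1) ^ 2 := by
  obtain ⟨h1, h2⟩ := U_three k
  rw [PP_sq, PP_sq]
  push_cast at *
  have hk : (0 : ℝ) ≤ k := by positivity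
  nlinarith

lemma PP_growth (n d : ℕ) : Real.log (PP n) + d * (Real.log 5 / 2) ≤ Real.log (PP (n + d)) := by
  induction d with
  | zero => simp
  | succ d ih =>
    have h := PP_step (n + d)
    have hp := PP_pos (n + d)
    have hp' := PP_pos (n + d + 1)
    have h2 := Real.log_le_log (by positivity) h
    rw [Real.log_mul (by norm_num) (by positivity), Real.log_pow, Real.log_pow] at h2
    push_cast at *
    rw [← add_assoc]
    linarith

lemma log_two_sinh {x : ℝ} (hx : 0 < x) :
    Real.log (2 * Real.sinh x) = x + Real.log (1 - Real.exp (-2 * x)) := by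
  have h1 : Real.exp (-2 * x) < 1 := by rw [Real.exp_lt_one_iff]; linarith
  have h2 : 2 * Real.sinh x = Real.exp x * (1 - Real.exp (-2 * x)) := by
    rw [Real.sinh_eq, mul_sub, ← Real.exp_add]
    ring_nf
  rw [h2, Real.log_mul (Real.exp_pos x).ne' (by linarith), Real.log_exp]

lemma log_two_sinh_le {x : ℝ} (hx : 0 < x) : Real.log (2 * Real.sinh x) ≤ x := by
  rw [log_two_sinh hx]
  have h1 : Real.exp (-2 * x) < 1 := by rw [Real.exp_lt_one_iff]; linarith
  have := Real.log_nonpos (x := 1 - Real.exp (-2 * x)) (by linarith)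
    (by linarith [Real.exp_pos (-2 * x)])
  linarith

lemma log_sinh_mono {a b s : ℝ} (ha : 0 < a) (hab : a ≤ b) (hs : 0 < s) :
    b * Real.log (2 * Real.sinh (a * s)) ≤ a * Real.log (2 * Real.sinh (b * s)) := by
  have hb : 0 < b := by linarith
  have has : 0 < a * s := by positivity
  rw [log_two_sinh has, log_two_sinh (by positivity)]
  have h1 : Real.exp (-2 * (a * s)) < 1 := by rw [Real.exp_lt_one_iff]; linarith
  have h2 : Real.exp (-2 * (b * s)) ≤ Real.exp (-2 * (a * s)) := by
    apply Real.exp_le_exp.mpr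
    nlinarith
  have h3 : Real.log (1 - Real.exp (-2 * (a * s))) ≤ Real.log (1 - Real.exp (-2 * (b * s))) :=
    Real.log_le_log (by linarith) (by linarith)
  have h4 := Real.log_nonpos (x := 1 - Real.exp (-2 * (a * s))) (by linarith)
    (by linarith [Real.exp_pos (-2 * (a * s))])
  nlinarith

lemma prod_lower (e : ℕ → ℝ) (n : ℕ) (h0 : ∀ i < n, 0 ≤ e i)
    (h1 : ∀ i < n, e i ≤ 1 / ((i : ℝ) + 2) ^ 4) :
    3 / 4 + 1 / (4 * ((n : ℝ) + 1)) ≤ ∏ i ∈ range n, (1 - e i) ∧ ∏ i ∈ range n, (1 - e i) ≤ 1 := by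
  induction n with
  | zero => norm_num
  | succ n ih =>
    obtain ⟨h2, h3⟩ := ih (fun i hi => h0 i (by omega)) (fun i hi => h1 i (by omega))
    have h4 := h0 n (by omega)
    have h5 := h1 n (by omega)
    rw [Finset.prod_range_succ]
    set Q := ∏ i ∈ range n, (1 - e i)
    have hn : (0 : ℝ) ≤ n := by positivity
    have h7 : (0 : ℝ) < 1 / (4 * ((n : ℝ) + 1)) := by positivity
    have h6 : 1 / ((n : ℝ) + 2) ^ 4 ≤ 1 / (4 * ((n : ℝ) + 1)) - 1 / (4 * ((n : ℝ) + 1 + 1)) := by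
      rw [div_sub_div _ _ (by positivity) (by positivity), div_le_div_iff₀ (by positivity) (by positivity)]
      nlinarith [pow_nonneg hn 2, pow_nonneg hn 3, pow_nonneg hn 4]
    push_cast
    constructor
    · nlinarith
    · nlinarith

lemma exp_hang_le (n i : ℕ) (hi : i < n) :
    Real.exp (-2 * (((n : ℝ) + 1) * hang n i)) ≤ 1 / ((i : ℝ) + 2) ^ 4 := by
  have hs := sin_lower n i hi
  set s := Real.sin ((i + 1) * Real.pi / (2 * (n + 1))) with hsdef
  have hN : (0 : ℝ) < n + 1 := by positivity
  have h0 : (0 : ℝ) ≤ ((i : ℝ) + 1) / (n + 1) := by positivity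
  have h1 : 1 + ((i : ℝ) + 1) / (n + 1) ≤ Real.exp (Real.arsinh s) := by
    rw [Real.exp_arsinh]
    have : (1 : ℝ) ≤ √(1 + s ^ 2) := Real.one_le_sqrt.mpr (by nlinarith [sq_nonneg s])
    linarith
  have h2 : (i : ℝ) + 2 ≤ Real.exp (Real.arsinh s) ^ (n + 1) := by
    have hb := one_add_mul_le_pow (a := ((i : ℝ) + 1) / (n + 1)) (by linarith) (n + 1)
    have : (((n + 1 : ℕ) : ℝ)) * (((i : ℝ) + 1) / (n + 1)) = i + 1 := by
      push_cast
      field_simp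
    rw [this] at hb
    have h3 := pow_le_pow_left₀ (by linarith) h1 (n + 1)
    linarith
  have h3 : Real.exp (-2 * (((n : ℝ) + 1) * hang n i)) =
      1 / (Real.exp (Real.arsinh s) ^ (n + 1)) ^ 4 := by
    rw [one_div, ← Real.exp_nat_mul, ← Real.exp_nat_mul, ← Real.exp_neg, hang]
    congr 1
    push_cast
    ring
  rw [h3]
  apply one_div_le_one_div_of_le (by positivity)
  exact pow_le_pow_left₀ (by positivity) h2 4

lemma log_prod_sinh (l : ℕ) (c : ℝ) (hc : 0 < c) :
    Real.log (∏ i ∈ range l, (2 * Real.sinh (c * hang l i))) =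
      ∑ i ∈ range l, Real.log (2 * Real.sinh (c * hang l i)) :=
  Real.log_prod fun i hi => (two_sinh_pos (mul_pos hc (hang_pos l i (mem_range.mp hi)))).ne'

lemma tau_pos (l m : ℕ) : (0 : ℝ) < gridTau (l + 1) (m + 1) := by
  have h := tau_mul_PP l m
  have h2 : 0 < ∏ i ∈ range l, (2 * Real.sinh (((m : ℝ) + 1) * hang l i)) :=
    Finset.prod_pos fun i hi => two_sinh_pos (mul_pos (by positivity) (hang_pos l i (mem_range.mp hi)))
  rw [← h] at h2
  exact pos_of_mul_pos_left h2 (PP_pos l).le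

lemma log_tau (l m : ℕ) : Real.log (gridTau (l + 1) (m + 1)) + Real.log (PP l) =
    ∑ i ∈ range l, Real.log (2 * Real.sinh (((m : ℝ) + 1) * hang l i)) := by
  rw [← Real.log_mul (tau_pos l m).ne' (PP_pos l).ne', tau_mul_PP, log_prod_sinh _ _ (by positivity)]

lemma boundA (l n m : ℕ) (h : l ≤ n) :
    ((n : ℝ) + 1) * (Real.log (gridTau (l + 1) (m + 1)) + Real.log (PP m)) ≤
    ((l : ℝ) + 1) * (Real.log (gridTau (n + 1) (m + 1)) + Real.log (PP m)) := by
  rw [tau_symm l m, tau_symm n m, log_tau, log_tau, Finset.mul_sum, Finset.mul_sum]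
  refine Finset.sum_le_sum fun i hi => ?_
  have h' : (l : ℝ) ≤ n := by exact_mod_cast h
  exact log_sinh_mono (by positivity) (by linarith) (hang_pos m i (mem_range.mp hi))

lemma boundB (n : ℕ) : ((n : ℝ) + 1) * (∑ i ∈ range n, hang n i) + Real.log (3 / 4) ≤
    Real.log (gridTau (n + 1) (n + 1)) + Real.log (PP n) := by
  have h1 : ∀ i ∈ range n, Real.log (2 * Real.sinh (((n : ℝ) + 1) * hang n i)) =
      ((n : ℝ) + 1) * hang n i + Real.log (1 - Real.exp (-2 * (((n : ℝ) + 1) * hang n i))) :=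
    fun i hi => log_two_sinh (mul_pos (by positivity) (hang_pos n i (mem_range.mp hi)))
  rw [log_tau, Finset.sum_congr rfl h1, Finset.sum_add_distrib, ← Finset.mul_sum]
  have h2 := (prod_lower (fun i => Real.exp (-2 * (((n : ℝ) + 1) * hang n i))) n
    (fun i _ => (Real.exp_pos _).le) (fun i hi => exp_hang_le n i hi)).1
  rw [← Real.log_prod]
  · have : (0 : ℝ) ≤ 1 / (4 * ((n : ℝ) + 1)) := by positivity
    have := Real.log_le_log (by norm_num) (show (3 / 4 : ℝ) ≤
      ∏ i ∈ range n, (1 - Real.exp (-2 * (((n : ℝ) + 1) * hang n i))) by linarith)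
    linarith
  · intro i hi
    have hp := mul_pos (show (0 : ℝ) < (n : ℝ) + 1 by positivity) (hang_pos n i (mem_range.mp hi))
    have : Real.exp (-2 * (((n : ℝ) + 1) * hang n i)) < 1 := by
      rw [Real.exp_lt_one_iff]; linarith
    linarith

lemma boundC (n m : ℕ) : Real.log (gridTau (n + 1) (m + 1)) + Real.log (PP n) ≤
    ((m : ℝ) + 1) * (∑ i ∈ range n, hang n i) := by
  rw [log_tau, Finset.mul_sum]
  refine Finset.sum_le_sum fun i hi => ?_
  exact log_two_sinh_le (mul_pos (by positivity) (hang_pos n i (mem_range.mp hi)))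

lemma main_lt (l m n : ℕ) (hlm : l < m) (harea : (l + 1) * (m + 1) = (n + 1) ^ 2) :
    gridTau (l + 1) (m + 1) ≤ gridTau (n + 1) (n + 1) := by
  have hln : l < n := by nlinarith
  have hnm : n < m := by nlinarith
  obtain ⟨d, rfl⟩ : ∃ d, m = n + d := ⟨m - n, by omega⟩
  have hA := boundA l n (n + d) hln.le
  have hB := boundB n
  have hC := boundC n (n + d)
  have hG := PP_growth n d
  have hk : n + d + 1 ≤ d ^ 2 := by
    have h1 : d ^ 2 + 2 * (n + 1) * (n + d + 1) = (n + d + 1) * (l + n + d + 2) := by nlinarith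
    by_contra hlt
    push Not at hlt
    have hd : 0 < d := by omega
    have h2 : l + n + d + 2 ≤ 2 * (n + 1) := by
      by_contra h3
      push Not at h3
      nlinarith
    nlinarith [Nat.pow_pos (n := 2) hd]
  have harea' : ((l : ℝ) + 1) * (n + d + 1) = (n + 1) ^ 2 := by exact_mod_cast harea
  have hk' : (n : ℝ) + d + 1 ≤ d ^ 2 := by exact_mod_cast hk
  have hlog : 0 ≤ Real.log 5 / 2 + Real.log (3 / 4) := by
    have h1 : Real.log 5 + 2 * Real.log (3 / 4) = Real.log (5 * (3 / 4) ^ 2) := by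
      rw [Real.log_mul (by norm_num) (by norm_num), Real.log_pow]
      norm_num
    have h2 : 0 ≤ Real.log (5 * (3 / 4) ^ 2) := Real.log_nonneg (by norm_num)
    linarith
  have hlog5 : 0 ≤ Real.log 5 / 2 := by
    have := Real.log_nonneg (show (1 : ℝ) ≤ 5 by norm_num)
    linarith
  have hgoal : Real.log (gridTau (l + 1) (n + d + 1)) ≤ Real.log (gridTau (n + 1) (n + 1)) := by
    push_cast at hA hC
    set a := Real.log (gridTau (l + 1) (n + d + 1))
    set b := Real.log (gridTau (n + 1) (n + d + 1))
    set c := Real.log (gridTau (n + 1) (n + 1))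
    set p := Real.log (PP (n + d))
    set q := Real.log (PP n)
    set S := ∑ i ∈ range n, hang n i
    set ε := Real.log (3 / 4)
    set L5 := Real.log 5 / 2
    have hN : (0 : ℝ) < n + 1 := by positivity
    have hM : (0 : ℝ) < n + d + 1 := by positivity
    -- multiply
    have e1 : ((n : ℝ) + d + 1) * (a + p) ≤ (n + 1) * (b + p) := by
      have := mul_le_mul_of_nonneg_left hA hM.le
      have e : ((n : ℝ) + d + 1) * ((n + 1) * (a + p)) ≤ (n + 1) * ((n + 1) * (b + p)) := by
        calc _ ≤ _ := this
          _ = (((l : ℝ) + 1) * (n + d + 1)) * (b + p) := by ring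
          _ = _ := by rw [harea']; ring
      nlinarith
    have e2 : ((n : ℝ) + 1) * (b + q) ≤ (n + 1) * ((n + d + 1) * S) :=
      mul_le_mul_of_nonneg_left hC hN.le
    have e3 : ((n : ℝ) + d + 1) * ((n + 1) * S + ε) ≤ (n + d + 1) * (c + q) :=
      mul_le_mul_of_nonneg_left hB hM.le
    have e4 : (d : ℝ) * (q + d * L5) ≤ d * p := mul_le_mul_of_nonneg_left hG (by positivity)
    have e5 : ((n : ℝ) + d + 1) * L5 ≤ d ^ 2 * L5 := mul_le_mul_of_nonneg_right hk' hlog5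
    have e6 : 0 ≤ ((n : ℝ) + d + 1) * (L5 + ε) := mul_nonneg hM.le hlog
    have e7 : ((n : ℝ) + d + 1) * a ≤ (n + d + 1) * c := by linarith
    exact le_of_mul_le_mul_left e7 hM
  have := (Real.log_le_log_iff (tau_pos l (n + d)) (tau_pos n n)).mp hgoal
  exact_mod_cast this

end Analysis

end Main

theorem square_maximal (l m n : ℕ) (hl : 0 < l) (hm : 0 < m) (hn : 0 < n)
    (harea : l * m = n ^ 2) :
    gridTau l m ≤ gridTau n n := by
  obtain ⟨l, rfl⟩ : ∃ k, l = k + 1 := ⟨l - 1, by omega⟩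
  obtain ⟨m, rfl⟩ : ∃ k, m = k + 1 := ⟨m - 1, by omega⟩
  obtain ⟨n, rfl⟩ : ∃ k, n = k + 1 := ⟨n - 1, by omega⟩
  rcases lt_trichotomy l m with h | h | h
  · exact main_lt l m n h harea
  · subst h
    have : l = n := by nlinarith
    rw [this]
  · rw [tau_symm]
    exact main_lt m l n h (by rw [mul_comm]; exact harea)
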